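/- arXiv:0709.4586 — 2 statements merged into one kernel-verified Lean document; each statement's English description precedes it below -/
import Mathlib

section
/- Let V be a finite-dimensional real inner product space, let τ : V × V × V → ℝ be an alternating trilinear form, and let T : V × V → V be the bilinear map determined by ⟨T(X,Y), Z⟩ = τ(X,Y,Z) for all X, Y, Z ∈ V. Then the quadrilinear form σ(X,Y,Z,W) := ⟨T(X,Y), T(Z,W)⟩ + ⟨T(Y,Z), T(X,W)⟩ + ⟨T(Z,X), T(Y,W)⟩ is fully alternating, i.e. it changes sign under the transposition of any two of its four arguments. -/
open scoped RealInnerProductSpace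

/-!
Nondegeneracy of the inner product makes `T` skew, so `(X, Y, Z, W) ↦ ⟪T X Y, T Z W⟫` has the pair
symmetries of a curvature tensor, and `σ` is its image under the Bianchi map. That image is skew
under each of the three adjacent transpositions, and these generate the others by conjugation.
-/

theorem eq_neg_swap₁₃_of_swap₁₂_of_swap₂₃ {α A : Type*} [InvolutiveNeg A] {f : α → α → α → A}
    (h₁₂ : ∀ X Y Z, f X Y Z = -f Y X Z) (h₂₃ : ∀ X Y Z, f X Y Z = -f X Z Y) (X Y Z : α) :
    f X Y Z = -f Z Y X := by
  rw [h₁₂ X Y, h₂₃ Y X, h₁₂ Y Z, neg_neg]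

section BianchiSum

variable {α A : Type*} [AddCommGroup A]

/-- The Bianchi map: the cyclic sum of `q` over its first three arguments. Its vanishing is the
first Bianchi identity for `q`. No linearity of `q` is assumed, so `q` is a plain function. -/
def bianchiSum (q : α → α → α → α → A) (X Y Z W : α) : A :=
  q X Y Z W + q Y Z X W + q Z X Y W

variable {q : α → α → α → α → A}

theorem bianchiSum_swap₁₂ (hskew : ∀ X Y Z W, q X Y Z W = -q Y X Z W) (X Y Z W : α) :
    bianchiSum q X Y Z W = -bianchiSum q Y X Z W := by
  rw [bianchiSum, bianchiSum, hskew X Y, hskew Y Z, hskew Z X]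
  abel

theorem bianchiSum_rotate (q : α → α → α → α → A) (X Y Z W : α) :
    bianchiSum q X Y Z W = bianchiSum q Y Z X W := by
  rw [bianchiSum, bianchiSum]
  abel

theorem bianchiSum_swap₂₃ (hskew : ∀ X Y Z W, q X Y Z W = -q Y X Z W) (X Y Z W : α) :
    bianchiSum q X Y Z W = -bianchiSum q X Z Y W := by
  rw [bianchiSum_rotate q X, bianchiSum_swap₁₂ hskew, ← bianchiSum_rotate q X]

theorem bianchiSum_swap₃₄ (hskew : ∀ X Y Z W, q X Y Z W = -q Y X Z W)
    (hpair : ∀ X Y Z W, q X Y Z W = q Z W X Y) (X Y Z W : α) :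
    bianchiSum q X Y Z W = -bianchiSum q X Y W Z := by
  have h_XY : q X Y Z W = -q X Y W Z := by rw [hpair, hskew, hpair W Z]
  have h_YZ : q Y Z X W = -q W X Y Z := by rw [hpair, hskew]
  have h_ZX : q Z X Y W = -q Y W X Z := by rw [hskew, hpair X Z]
  rw [bianchiSum, bianchiSum, h_XY, h_YZ, h_ZX]
  abel

end BianchiSum

theorem statement7_general {R α N : Type*} [CommRing R] [AddCommGroup N] [Module R N]
    {B : LinearMap.BilinForm R N} (hB : B.IsSymm)
    {T : α → α → N} (hT : ∀ X Y, T X Y = -T Y X)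
    {σ : α → α → α → α → R}
    (hσ : ∀ X Y Z W, σ X Y Z W = B (T X Y) (T Z W) + B (T Y Z) (T X W) + B (T Z X) (T Y W))
    (X Y Z W : α) :
    σ X Y Z W = -σ Y X Z W ∧
    σ X Y Z W = -σ Z Y X W ∧
    σ X Y Z W = -σ W Y Z X ∧
    σ X Y Z W = -σ X Z Y W ∧
    σ X Y Z W = -σ X W Z Y ∧
    σ X Y Z W = -σ X Y W Z := by
  let q : α → α → α → α → R := fun X Y Z W => B (T X Y) (T Z W)
  obtain rfl : σ = bianchiSum q := by
    ext X Y Z W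
    exact hσ X Y Z W
  have hskew (X Y Z W) : q X Y Z W = -q Y X Z W := by
    simp only [q, hT X Y, map_neg, LinearMap.neg_apply]
  have hpair (X Y Z W) : q X Y Z W = q Z W X Y := hB.eq _ _
  have swap₁₂ := bianchiSum_swap₁₂ hskew
  have swap₂₃ := bianchiSum_swap₂₃ hskew
  have swap₃₄ := bianchiSum_swap₃₄ hskew hpair
  have swap₁₃ (X Y Z W) : bianchiSum q X Y Z W = -bianchiSum q Z Y X W :=
    eq_neg_swap₁₃_of_swap₁₂_of_swap₂₃ (f := (bianchiSum q · · · W))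
      (swap₁₂ · · · W) (swap₂₃ · · · W) X Y Z
  have swap₂₄ (X Y Z W) : bianchiSum q X Y Z W = -bianchiSum q X W Z Y :=
    eq_neg_swap₁₃_of_swap₁₂_of_swap₂₃ (swap₂₃ X) (swap₃₄ X) Y Z W
  have swap₁₄ (X Y Z W) : bianchiSum q X Y Z W = -bianchiSum q W Y Z X :=
    eq_neg_swap₁₃_of_swap₁₂_of_swap₂₃ (f := (bianchiSum q · · Z ·))
      (swap₁₂ · · Z ·) (swap₂₄ · · Z ·) X Y W
  exact ⟨swap₁₂ X Y Z W, swap₁₃ X Y Z W, swap₁₄ X Y Z W, swap₂₃ X Y Z W, swap₂₄ X Y Z W,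
    swap₃₄ X Y Z W⟩

theorem statement7 (V : Type*) [NormedAddCommGroup V] [InnerProductSpace ℝ V]
    [FiniteDimensional ℝ V]
    (τ : V →ₗ[ℝ] V →ₗ[ℝ] V →ₗ[ℝ] ℝ)
    (hτ12 : ∀ X Y Z : V, τ X Y Z = -τ Y X Z)
    (hτ23 : ∀ X Y Z : V, τ X Y Z = -τ X Z Y)
    (hτ13 : ∀ X Y Z : V, τ X Y Z = -τ Z Y X)
    (T : V →ₗ[ℝ] V →ₗ[ℝ] V)
    (hT : ∀ X Y Z : V, ⟪T X Y, Z⟫ = τ X Y Z)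
    (σ : V → V → V → V → ℝ)
    (hσ : ∀ X Y Z W : V,
      σ X Y Z W = ⟪T X Y, T Z W⟫ + ⟪T Y Z, T X W⟫ + ⟪T Z X, T Y W⟫) :
    ∀ X Y Z W : V,
      σ X Y Z W = -σ Y X Z W ∧
      σ X Y Z W = -σ Z Y X W ∧
      σ X Y Z W = -σ W Y Z X ∧
      σ X Y Z W = -σ X Z Y W ∧
      σ X Y Z W = -σ X W Z Y ∧
      σ X Y Z W = -σ X Y W Z := by
  have skew (X Y : V) : T X Y = -T Y X :=
    ext_inner_right ℝ fun Z => by rw [inner_neg_left, hT, hT, hτ12]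
  exact statement7_general (B := innerₗ V) (LinearMap.BilinForm.isSymm_iff.2 isSymm_inner) skew hσ
end

section
/- Let m be a positive integer, let τ_{ijk} be a fully antisymmetric family of real numbers, let R_{ijkl} be an algebraic curvature tensor on ℝ^m, define R'_{ijkl} := R_{ijkl} - (1/4) Σ_p (2 τ_{ijp} τ_{kpl} + τ_{jkp} τ_{ipl} + τ_{kip} τ_{jpl}), and set S_{ijkl} := R'_{ijkl} - Σ_p τ_{ijp} τ_{klp}. Then S is itself an algebraic curvature tensor: S_{ijkl} = -S_{jikl}, S_{ijkl} = -S_{ijlk}, S_{ijkl} = S_{klij}, and S satisfies the first Bianchi identity S_{ijkl} + S_{jkil} + S_{kijl} = 0. -/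
open scoped BigOperators

/-!
Set `T i j k l = ∑ p, τ i j p * τ k l p`, a symmetric bilinear form on bivectors. Antisymmetry of
`τ` in its last two indices turns the correction terms into values of `T`, and the coefficients
`1/4` and `1` are exactly those for which
`S i j k l = R i j k l - 1/4 * (2 * T i j k l - T j k i l - T k i j l)`.
The bracket is three times the projection of `T` onto the kernel of the Bianchi map
`T ↦ 1/3 * (T i j k l + T j k i l + T k i j l)`, so `S` is a linear combination of algebraic
curvature tensors.
-/

/-- The components of a symmetric bilinear form on bivectors, with values in an additive group.
Antisymmetry in the last two indices is a consequence, so it is not a field. -/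
structure IsBivectorForm {ι A : Type*} [AddCommGroup A] (T : ι → ι → ι → ι → A) : Prop where
  antisymm_left : ∀ i j k l, T i j k l = -T j i k l
  pair_symm : ∀ i j k l, T i j k l = T k l i j

/-- An algebraic curvature tensor: a symmetric bilinear form on bivectors satisfying the first
Bianchi identity. -/
structure IsAlgebraicCurvatureTensor {ι A : Type*} [AddCommGroup A] (T : ι → ι → ι → ι → A) : Prop
    extends IsBivectorForm T where
  bianchi : ∀ i j k l, T i j k l + T j k i l + T k i j l = 0

/-- Three times the projection of a bivector form onto the algebraic curvature tensors; the factor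
three avoids a division. -/
def curvaturePart {ι A : Type*} [AddCommGroup A] (T : ι → ι → ι → ι → A) (i j k l : ι) : A :=
  2 • T i j k l - T j k i l - T k i j l

/-- The contraction of two copies of a three-index family along their last indices. -/
def selfContraction {ι K : Type*} [Fintype ι] [CommRing K] (τ : ι → ι → ι → K) (i j k l : ι) : K :=
  ∑ p, τ i j p * τ k l p

section AddCommGroup

variable {ι A : Type*} [AddCommGroup A] {T U : ι → ι → ι → ι → A}

theorem IsBivectorForm.antisymm_right (hT : IsBivectorForm T) (i j k l : ι) :
    T i j k l = -T i j l k := by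
  rw [hT.pair_symm, hT.antisymm_left, hT.pair_symm]

theorem IsBivectorForm.isAlgebraicCurvatureTensor_curvaturePart (hT : IsBivectorForm T) :
    IsAlgebraicCurvatureTensor (curvaturePart T) where
  antisymm_left i j k l := by
    simp only [curvaturePart]
    rw [hT.antisymm_left i j, hT.antisymm_left j k, hT.antisymm_left k i]
    abel
  pair_symm i j k l := by
    have hjkil : T j k i l = T l i k j := by
      rw [hT.pair_symm, hT.antisymm_left, hT.antisymm_right, neg_neg]
    have hkijl : T k i j l = T i k l j := by
      rw [hT.antisymm_left, hT.antisymm_right, neg_neg]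
    simp only [curvaturePart]
    rw [hT.pair_symm i j, hjkil, hkijl]
  bianchi i j k l := by
    simp only [curvaturePart]
    abel

namespace IsAlgebraicCurvatureTensor

theorem sub (hT : IsAlgebraicCurvatureTensor T) (hU : IsAlgebraicCurvatureTensor U) :
    IsAlgebraicCurvatureTensor (T - U) where
  antisymm_left i j k l := by
    simp only [Pi.sub_apply]
    rw [hT.antisymm_left, hU.antisymm_left]
    abel
  pair_symm i j k l := by
    simp only [Pi.sub_apply]
    rw [hT.pair_symm, hU.pair_symm]
  bianchi i j k l := by
    simp only [Pi.sub_apply]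
    calc
      _ = (T i j k l + T j k i l + T k i j l) - (U i j k l + U j k i l + U k i j l) := by abel
      _ = 0 := by rw [hT.bianchi, hU.bianchi, sub_zero]

theorem const_smul {M : Type*} [Monoid M] [DistribMulAction M A] (c : M)
    (hT : IsAlgebraicCurvatureTensor T) : IsAlgebraicCurvatureTensor (c • T) where
  antisymm_left i j k l := by
    simp only [Pi.smul_apply]
    rw [hT.antisymm_left, smul_neg]
  pair_symm i j k l := by
    simp only [Pi.smul_apply]
    rw [hT.pair_symm]
  bianchi i j k l := by
    simp only [Pi.smul_apply]
    rw [← smul_add, ← smul_add, hT.bianchi, smul_zero]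

end IsAlgebraicCurvatureTensor

end AddCommGroup

section SelfContraction

variable {ι K : Type*} [Fintype ι] [CommRing K] {τ : ι → ι → ι → K}

theorem isBivectorForm_selfContraction (hτ : ∀ i j k, τ i j k = -τ j i k) :
    IsBivectorForm (selfContraction τ) where
  antisymm_left i j k l := by
    simp only [selfContraction, hτ i j, neg_mul, Finset.sum_neg_distrib]
  pair_symm i j k l := by
    simp only [selfContraction, mul_comm]

theorem sum_mul_middle_eq_neg_selfContraction (hτ : ∀ i j k, τ i j k = -τ i k j) (i j k l : ι) :
    ∑ p, τ i j p * τ k p l = -selfContraction τ i j k l := by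
  simp only [selfContraction, hτ k _ l, mul_neg, Finset.sum_neg_distrib]

theorem statement10_general {c : K} (hc : 4 * c = 1)
    (hτ12 : ∀ i j k, τ i j k = -τ j i k) (hτ23 : ∀ i j k, τ i j k = -τ i k j)
    {R R' S : ι → ι → ι → ι → K} (hR : IsAlgebraicCurvatureTensor R)
    (hR' : ∀ i j k l, R' i j k l = R i j k l
      - c * ∑ p, (2 * τ i j p * τ k p l + τ j k p * τ i p l + τ k i p * τ j p l))
    (hS : ∀ i j k l, S i j k l = R' i j k l - ∑ p, τ i j p * τ k l p) :
    IsAlgebraicCurvatureTensor S := by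
  have hS_eq : S = R - c • curvaturePart (selfContraction τ) := by
    funext i j k l
    rw [hS, hR', ← selfContraction]
    simp only [Finset.sum_add_distrib, mul_assoc, ← Finset.mul_sum,
      sum_mul_middle_eq_neg_selfContraction hτ23, curvaturePart, Pi.sub_apply, Pi.smul_apply,
      smul_eq_mul, nsmul_eq_mul, Nat.cast_ofNat]
    linear_combination selfContraction τ i j k l * hc
  rw [hS_eq]
  exact hR.sub
    ((isBivectorForm_selfContraction hτ12).isAlgebraicCurvatureTensor_curvaturePart.const_smul c)

end SelfContraction

theorem statement10 (m : ℕ) (hm : 0 < m)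
    (τ : Fin m → Fin m → Fin m → ℝ)
    (hτ12 : ∀ i j k, τ i j k = -τ j i k)
    (hτ23 : ∀ i j k, τ i j k = -τ i k j)
    (hτ13 : ∀ i j k, τ i j k = -τ k j i)
    (R : Fin m → Fin m → Fin m → Fin m → ℝ)
    (hR1 : ∀ i j k l, R i j k l = -R j i k l)
    (hR2 : ∀ i j k l, R i j k l = -R i j l k)
    (hR3 : ∀ i j k l, R i j k l = R k l i j)
    (hBianchi : ∀ i j k l, R i j k l + R j k i l + R k i j l = 0)
    (R' : Fin m → Fin m → Fin m → Fin m → ℝ)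
    (hR' : ∀ i j k l, R' i j k l = R i j k l
      - (1/4) * ∑ p, (2 * τ i j p * τ k p l + τ j k p * τ i p l + τ k i p * τ j p l))
    (S : Fin m → Fin m → Fin m → Fin m → ℝ)
    (hS : ∀ i j k l, S i j k l = R' i j k l - ∑ p, τ i j p * τ k l p) :
    (∀ i j k l, S i j k l = -S j i k l) ∧
    (∀ i j k l, S i j k l = -S i j l k) ∧
    (∀ i j k l, S i j k l = S k l i j) ∧
    (∀ i j k l, S i j k l + S j k i l + S k i j l = 0) := by
  have h := statement10_general (by norm_num) hτ12 hτ23 ⟨⟨hR1, hR3⟩, hBianchi⟩ hR' hS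
  exact ⟨h.antisymm_left, h.antisymm_right, h.pair_symm, h.bianchi⟩
end
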